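/- Let S = (S, I, O, G, D, h) be a weakly-complete deterministic TFSM with output delays all of whose guards are half-open intervals [u,v) with integers 0 ≤ u < v, let s and s' be states of S, and let α be a non-integer timed input sequence with α ∈ Dom(s) = Dom(s'). If out_{R(S)}(s,[α]_{I_G}) ≠ out_{R(S)}(s',[α]_{I_G}), then timed_out_S(s,α) ≠ timed_out_S(s',α). -/

import Mathlib

/-!
If two timed outputs `t_j + d_j` and `t_k + d'_k` of runs over the same non-integer `α` coincide,
then `t_j - t_k` is an integer, so `j = k`: the fractional part of the time of an output reveals
which input produced it. Hence the multiset of timed outputs determines the abstract output word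
`(o_1, d_1) … (o_n, d_n)` (`map_eq_of_perm`). On the other hand, along `[α]`, the words produced by
the region FSM are exactly the abstract output words of the timed runs of `α`
(`TRunTo.toRegion` and `exists_tRunTo_of_region`): a refined guard that meets a guard of the
machine lies inside it, since no boundary point is interior to a refined guard. So equal timed
outputs force equal region outputs.
-/

/-- A timed guard: an interval with natural-number endpoints, left-closed, and
either right-open (`rightClosed = false`, i.e. `[lo, hi)`) or right-closed
(`rightClosed = true`, i.e. `[lo, hi]`; point intervals are `[u,u]`). -/
structure Guard where
  lo : ℕ
  hi : ℕ
  rightClosed : Bool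
deriving DecidableEq

/-- Membership of a timestamp in a guard. -/
def GuardMem (g : Guard) (t : ℝ) : Prop :=
  (g.lo : ℝ) ≤ t ∧ (if g.rightClosed then t ≤ (g.hi : ℝ) else t < (g.hi : ℝ))

/-- Guard inclusion (as sets of timestamps). -/
def GuardSub (g g' : Guard) : Prop := ∀ t : ℝ, GuardMem g t → GuardMem g' t

/-- A transition of a TFSM with output delays: source state, input, timed guard,
output, positive integer output delay, destination state. -/
structure TTrans (S I O : Type) where
  src : S
  inp : I
  guard : Guard
  out : O
  delay : ℕ+
  dst : S

/-- A TFSM with output delays over states `S`, inputs `I`, outputs `O`,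
given by its transition relation. -/
abbrev TFSM (S I O : Type) := Set (TTrans S I O)

variable {S I O A B : Type}

/-- Determinism: any two distinct transitions from the same state on the same input
have disjoint guards. -/
def TFSMDeterministic (M : TFSM S I O) : Prop :=
  ∀ tr ∈ M, ∀ tr' ∈ M, tr.src = tr'.src → tr.inp = tr'.inp → tr ≠ tr' →
    ∀ t : ℝ, ¬ (GuardMem tr.guard t ∧ GuardMem tr'.guard t)

/-- A timed input sequence: nonnegative, nondecreasing timestamps. -/
def IsTimedInputSeq (α : List (I × ℝ)) : Prop :=
  (∀ p ∈ α, 0 ≤ p.2) ∧ List.Chain' (· ≤ ·) (α.map Prod.snd)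

/-- `TRunTo M s t0 α trs sf`: starting at state `s` at time `t0`, the timed input
sequence `α` induces the sequence of transitions `trs`, ending at state `sf`. -/
inductive TRunTo (M : TFSM S I O) : S → ℝ → List (I × ℝ) → List (TTrans S I O) → S → Prop
  | nil (s : S) (t0 : ℝ) : TRunTo M s t0 [] [] s
  | cons {s sf : S} {t0 t : ℝ} {i : I} {tr : TTrans S I O}
      {rest : List (I × ℝ)} {trs : List (TTrans S I O)} :
      tr ∈ M → tr.src = s → tr.inp = i → GuardMem tr.guard (t - t0) →
      TRunTo M tr.dst t rest trs sf →
      TRunTo M s t0 ((i, t) :: rest) (tr :: trs) sf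

/-- `α` induces the sequence of transitions `trs` from state `s`. -/
def TInduces (M : TFSM S I O) (s : S) (α : List (I × ℝ)) (trs : List (TTrans S I O)) : Prop :=
  ∃ sf : S, TRunTo M s 0 α trs sf

/-- `Dom(s)`: the timed input sequences inducing at least one sequence of transitions from `s`. -/
def TDom (M : TFSM S I O) (s : S) : Set (List (I × ℝ)) :=
  { α | IsTimedInputSeq α ∧ ∃ trs, TInduces M s α trs }

/-- `next_state(s, α) = sf` (as a relation, since `next_state` is partial). -/
def TReaches (M : TFSM S I O) (s : S) (α : List (I × ℝ)) (sf : S) : Prop :=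
  ∃ trs, TRunTo M s 0 α trs sf

/-- The timed outputs of a run: the `j`-th transition produces its output at time
`t_j + d_j`. -/
def rawOutputs (α : List (I × ℝ)) (trs : List (TTrans S I O)) : List (O × ℝ) :=
  List.zipWith (fun p tr => (tr.out, p.2 + ((tr.delay : ℕ) : ℝ))) α trs

/-- `timed_out(s, α)`: all time-sorted reorderings of the timed outputs of the run of `α` at `s`. -/
def timedOut (M : TFSM S I O) (s : S) (α : List (I × ℝ)) : Set (List (O × ℝ)) :=
  { β | ∃ trs sf, TRunTo M s 0 α trs sf ∧ List.Perm β (rawOutputs α trs) ∧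
        List.Chain' (· ≤ ·) (β.map Prod.snd) }

/-- Homing sequence for a TFSM with output delays. -/
def THoming (M : TFSM S I O) (α : List (I × ℝ)) : Prop :=
  IsTimedInputSeq α ∧ ∀ s1 s2 : S, timedOut M s1 α = timedOut M s2 α →
    ∃ sf : S, TReaches M s1 α sf ∧ TReaches M s2 α sf

/-- Synchronizing sequence for a TFSM with output delays. -/
def TSync (M : TFSM S I O) (α : List (I × ℝ)) : Prop :=
  IsTimedInputSeq α ∧ ∃ sf : S, ∀ s : S, TReaches M s α sf

/-- A timed input sequence is non-integer if the difference of any two distinct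
timestamps is not an integer. -/
def NonInteger (α : List (I × ℝ)) : Prop :=
  ∀ j k : Fin α.length, j ≠ k → ∀ z : ℤ, (α.get j).2 - (α.get k).2 ≠ (z : ℝ)

/-- A transition of an (untimed) FSM. -/
structure FTrans (S A B : Type) where
  src : S
  inp : A
  out : B
  dst : S

/-- An (untimed) FSM given by its transition relation. -/
abbrev UntimedFSM (S A B : Type) := Set (FTrans S A B)

/-- FSM run: input sequence, produced output sequence, final state. -/
inductive FRunTo (T : UntimedFSM S A B) : S → List A → List B → S → Prop
  | nil (s : S) : FRunTo T s [] [] s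
  | cons {s sf : S} {a : A} {rest : List A} {γ : List B} {f : FTrans S A B} :
      f ∈ T → f.src = s → f.inp = a → FRunTo T f.dst rest γ sf →
      FRunTo T s (a :: rest) (f.out :: γ) sf

def FReaches (T : UntimedFSM S A B) (s : S) (β : List A) (sf : S) : Prop :=
  ∃ γ, FRunTo T s β γ sf

/-- `out(s, β)` for an FSM (a set, i.e. a partial value, since the FSM may be partial). -/
def FOut (T : UntimedFSM S A B) (s : S) (β : List A) : Set (List B) :=
  { γ | ∃ sf, FRunTo T s β γ sf }

def FDeterministic (T : UntimedFSM S A B) : Prop :=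
  ∀ f ∈ T, ∀ f' ∈ T, f.src = f'.src → f.inp = f'.inp → f = f'

/-- Completeness of an FSM relative to an input alphabet `A0`. -/
def FCompleteOn (T : UntimedFSM S A B) (A0 : Set A) : Prop :=
  ∀ s : S, ∀ a ∈ A0, ∃ f ∈ T, f.src = s ∧ f.inp = a

/-- Synchronizing sequence for an FSM. -/
def FSync (T : UntimedFSM S A B) (β : List A) : Prop :=
  ∃ sf : S, ∀ s : S, FReaches T s β sf

/-- Homing sequence for an FSM. -/
def FHoming (T : UntimedFSM S A B) (β : List A) : Prop :=
  ∀ s1 s2 : S, FOut T s1 β = FOut T s2 β →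
    ∃ sf : S, FReaches T s1 β sf ∧ FReaches T s2 β sf

/-- The guards appearing on transitions labeled with input `i`. -/
def guardsOf (M : TFSM S I O) (i : I) : Set Guard :=
  { g | ∃ tr ∈ M, tr.inp = i ∧ tr.guard = g }

/-- Boundary points of the guards labeled `i`. -/
def boundaries (M : TFSM S I O) (i : I) : Set ℕ :=
  { p | ∃ g ∈ guardsOf M i, g.lo = p ∨ g.hi = p }

/-- `Ḡ_i`: the half-open intervals determined by consecutive boundary points of `G_i`. -/
def refinedGuards (M : TFSM S I O) (i : I) : Set Guard :=
  { g | g.rightClosed = false ∧ g.lo ∈ boundaries M i ∧ g.hi ∈ boundaries M i ∧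
        g.lo < g.hi ∧ ∀ r ∈ boundaries M i, ¬ (g.lo < r ∧ r < g.hi) }

/-- The abstract input alphabet `I_G = {(i, g) : g ∈ Ḡ_i}`. -/
def absInputs (M : TFSM S I O) : Set (I × Guard) :=
  { p | p.2 ∈ refinedGuards M p.1 }

/-- The region FSM `R(S)` of a TFSM with output delays. -/
def regionFSM (M : TFSM S I O) : UntimedFSM S (I × Guard) (O × ℕ+) :=
  { f | f.inp ∈ absInputs M ∧ ∃ tr ∈ M, tr.src = f.src ∧ tr.inp = f.inp.1 ∧
        tr.out = f.out.1 ∧ tr.delay = f.out.2 ∧ tr.dst = f.dst ∧ GuardSub f.inp.2 tr.guard }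

/-- All guards are half-open intervals `[u, v)` with `u < v`. -/
def HalfOpenGuards (M : TFSM S I O) : Prop :=
  ∀ tr ∈ M, tr.guard.rightClosed = false ∧ tr.guard.lo < tr.guard.hi

/-- Weak completeness: all states have the same domain. -/
def WeaklyComplete (M : TFSM S I O) : Prop :=
  ∀ s s' : S, TDom M s = TDom M s'

/-- `Projects M t0 α β`: `β` is the untimed projection `[α]_{I_G}` of `α`
(relative to previous timestamp `t0`). -/
inductive Projects (M : TFSM S I O) : ℝ → List (I × ℝ) → List (I × Guard) → Prop
  | nil (t0 : ℝ) : Projects M t0 [] []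
  | cons {t0 t : ℝ} {i : I} {g : Guard} {rest : List (I × ℝ)} {brest : List (I × Guard)} :
      g ∈ refinedGuards M i → GuardMem g (t - t0) →
      Projects M t rest brest →
      Projects M t0 ((i, t) :: rest) ((i, g) :: brest)

/-- All guards are point intervals `[u, u]` with `u` a positive integer. -/
def PointIntervals (M : TFSM S I O) : Prop :=
  ∀ tr ∈ M, tr.guard.rightClosed = true ∧ tr.guard.lo = tr.guard.hi ∧ 0 < tr.guard.lo

/-- The region FSM of a TFSM with only point intervals: abstract inputs are the
(input, guard) pairs appearing on transitions. -/
def pointRegionFSM (M : TFSM S I O) : UntimedFSM S (I × Guard) (O × ℕ+) :=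
  { f | ∃ tr ∈ M, tr.src = f.src ∧ (tr.inp, tr.guard) = f.inp ∧
        (tr.out, tr.delay) = f.out ∧ tr.dst = f.dst }

/-- `t(α)`: the last timestamp of `α` (0 for the empty sequence). -/
def tEnd (α : List (I × ℝ)) : ℝ := (α.map Prod.snd).getLastD 0

/-- The number of timed outputs of the run produced at or after time `t(α)`
(counted with multiplicity). -/
noncomputable def tailCount (α : List (I × ℝ)) (trs : List (TTrans S I O)) : ℕ :=
  ((rawOutputs α trs).filter (fun p => decide (tEnd α ≤ p.2))).length

/-- The timed output tail of a run: the multiset of `(o, τ - t(α))` over timed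
outputs `(o, τ)` of the run with `τ ≥ t(α)`. -/
noncomputable def tailOf (α : List (I × ℝ)) (trs : List (TTrans S I O)) : Multiset (O × ℝ) :=
  ↑(((rawOutputs α trs).filter (fun p => decide (tEnd α ≤ p.2))).map
      (fun p => (p.1, p.2 - tEnd α)))

/-- The set of all timed output tails of the TFSM, together with the empty tail. -/
def Tout (M : TFSM S I O) : Set (Multiset (O × ℝ)) :=
  insert 0 { m | ∃ (s : S) (α : List (I × ℝ)) (trs : List (TTrans S I O)) (sf : S),
    α ∈ TDom M s ∧ TRunTo M s 0 α trs sf ∧ m = tailOf α trs }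

/-- The output delay at state `j` of the machine `B_n`. -/
def BnDelay (n : ℕ) (j : Fin n) : ℕ+ :=
  if (j : ℕ) = n - 2 then 3 else if (j : ℕ) = n - 1 then 1 else 2

/-- The transition of `B_n` out of state `j`. -/
def BnTrans (n : ℕ) [NeZero n] (j : Fin n) : TTrans (Fin n) Unit Unit :=
  ⟨j, (), ⟨1, 1, true⟩, (), BnDelay n j, j + 1⟩

/-- The TFSM `B_n` with only point intervals. -/
def Bn (n : ℕ) [NeZero n] : TFSM (Fin n) Unit Unit := Set.range (BnTrans n)

/-- The abstract output in `O_D` of a transition. -/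
def absOut (tr : TTrans S I O) : O × ℕ+ := (tr.out, tr.delay)

theorem TRunTo.length_eq {M : TFSM S I O} {s sf : S} {t0 : ℝ} {α : List (I × ℝ)}
    {trs : List (TTrans S I O)} (h : TRunTo M s t0 α trs sf) : trs.length = α.length := by
  induction h with
  | nil => rfl
  | cons _ _ _ _ _ ih => simp [ih]

/-- A refined guard meeting the guard of a transition is included in it. -/
theorem guardSub_of_mem {M : TFSM S I O} (hho : HalfOpenGuards M) {tr : TTrans S I O}
    (htr : tr ∈ M) {g : Guard} (hg : g ∈ refinedGuards M tr.inp) {t : ℝ}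
    (h1 : GuardMem g t) (h2 : GuardMem tr.guard t) : GuardSub g tr.guard := by
  obtain ⟨hrc, -, -, -, hb⟩ := hg
  obtain ⟨hrc', -⟩ := hho tr htr
  have hmem : tr.guard ∈ guardsOf M tr.inp := ⟨tr, htr, rfl, rfl⟩
  have hlo := hb tr.guard.lo ⟨_, hmem, Or.inl rfl⟩
  have hhi := hb tr.guard.hi ⟨_, hmem, Or.inr rfl⟩
  simp only [GuardMem, hrc, hrc', Bool.false_eq_true, if_false] at h1 h2
  have a1 : tr.guard.lo < g.hi := by exact_mod_cast h2.1.trans_lt h1.2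
  have a2 : g.lo < tr.guard.hi := by exact_mod_cast h1.1.trans_lt h2.2
  have b1 : tr.guard.lo ≤ g.lo := by
    by_contra hc
    exact hlo ⟨not_le.mp hc, a1⟩
  have b2 : g.hi ≤ tr.guard.hi := by
    by_contra hc
    exact hhi ⟨a2, not_le.mp hc⟩
  intro x hx
  simp only [GuardMem, hrc, hrc', Bool.false_eq_true, if_false] at hx ⊢
  exact ⟨le_trans (by exact_mod_cast b1) hx.1, hx.2.trans_le (by exact_mod_cast b2)⟩

/-- A timed run yields a run of the region FSM over the untimed projection. -/
theorem TRunTo.toRegion {M : TFSM S I O} (hho : HalfOpenGuards M) {s sf : S} {t0 : ℝ}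
    {α : List (I × ℝ)} {trs : List (TTrans S I O)} (h : TRunTo M s t0 α trs sf)
    {β : List (I × Guard)} (hp : Projects M t0 α β) :
    FRunTo (regionFSM M) s β (trs.map absOut) sf := by
  induction h generalizing β with
  | nil => cases hp; exact .nil _
  | @cons s sf t0 t i tr rest trs htr hs hi hg _ ih =>
    cases hp with
    | cons hr hm hrest =>
      rename_i g brest
      subst hs hi
      exact FRunTo.cons (f := ⟨tr.src, (tr.inp, g), absOut tr, tr.dst⟩)
        ⟨hr, tr, htr, rfl, rfl, rfl, rfl, rfl, guardSub_of_mem hho htr hr hm hg⟩ rfl rfl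
        (ih hrest)

/-- A run of the region FSM over the untimed projection of `α` lifts to a timed run of `α`. -/
theorem exists_tRunTo_of_region {M : TFSM S I O} {t0 : ℝ} {α : List (I × ℝ)}
    {β : List (I × Guard)} (hp : Projects M t0 α β) {s sf : S} {γ : List (O × ℕ+)}
    (h : FRunTo (regionFSM M) s β γ sf) :
    ∃ trs, TRunTo M s t0 α trs sf ∧ γ = trs.map absOut := by
  induction hp generalizing s γ with
  | nil => cases h; exact ⟨[], .nil _ _, rfl⟩
  | cons hr hm _ ih =>
    cases h with
    | cons hf hs hi hrun =>
      obtain ⟨-, tr, htr, h1, h2, h3, h4, h5, h6⟩ := hf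
      rw [hi] at h2 h6
      obtain ⟨trs, hrun', rfl⟩ := ih hrun
      rw [← h5] at hrun'
      exact ⟨tr :: trs, .cons htr (h1.trans hs) h2 (h6 _ hm) hrun',
        by rw [List.map_cons, absOut, h3, h4]⟩

/-- Over a non-integer input sequence, the multiset of timed outputs determines the sequence of
abstract outputs. -/
theorem map_eq_of_perm {α : List (I × ℝ)} (hni : NonInteger α) {trs trs' : List (TTrans S I O)}
    (h1 : trs.length = α.length) (h2 : trs'.length = α.length)
    (hp : (rawOutputs α trs).Perm (rawOutputs α trs')) :
    trs.map absOut = trs'.map absOut := by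
  apply List.ext_getElem (by simp [h1, h2])
  intro j hj hj'
  simp only [List.length_map] at hj hj'
  have hjα : j < α.length := h1 ▸ hj
  have hlen : j < (rawOutputs α trs).length := by simp [rawOutputs]; omega
  obtain ⟨k, hk, hkeq⟩ := List.getElem_of_mem (hp.subset (List.getElem_mem hlen))
  have hk2 : k < trs'.length := by simp [rawOutputs] at hk; omega
  have hkα : k < α.length := h2 ▸ hk2
  simp only [rawOutputs, List.getElem_zipWith, Prod.mk.injEq] at hkeq
  obtain ⟨ho, ht⟩ := hkeq
  have hjk : k = j := by
    by_contra hne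
    refine hni ⟨k, hkα⟩ ⟨j, hjα⟩ (fun h => hne (by simpa using h))
      (((trs[j].delay : ℕ) : ℤ) - ((trs'[k].delay : ℕ) : ℤ)) ?_
    simp only [List.get_eq_getElem]
    push_cast
    linarith
  subst hjk
  have hd : ((trs'[k].delay : ℕ) : ℝ) = ((trs[k].delay : ℕ) : ℝ) := by linarith
  have hdelay : trs'[k].delay = trs[k].delay := PNat.coe_injective (by exact_mod_cast hd)
  simp [absOut, ho, hdelay]

/-- Timed outputs can be listed in nondecreasing order of time. -/
theorem exists_sorted_perm (l : List (O × ℝ)) :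
    ∃ l' : List (O × ℝ), l'.Perm l ∧ List.IsChain (· ≤ ·) (l'.map Prod.snd) := by
  classical
  let r : O × ℝ → O × ℝ → Prop := fun a b => a.2 ≤ b.2
  have : Std.Total r := ⟨fun a b => le_total a.2 b.2⟩
  have : IsTrans (O × ℝ) r := ⟨fun _ _ _ h h' => le_trans (α := ℝ) h h'⟩
  refine ⟨l.insertionSort r, List.perm_insertionSort r l, List.Pairwise.isChain ?_⟩
  exact List.pairwise_map.2 (List.pairwise_insertionSort r l)

/-- Inclusion of timed outputs gives inclusion of region outputs over the untimed projection. -/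
theorem fOut_subset {M : TFSM S I O} (hho : HalfOpenGuards M) {s s' : S} {α : List (I × ℝ)}
    (hni : NonInteger α) {β : List (I × Guard)} (hproj : Projects M 0 α β)
    (h : timedOut M s α ⊆ timedOut M s' α) :
    FOut (regionFSM M) s β ⊆ FOut (regionFSM M) s' β := by
  rintro γ ⟨sf, hγ⟩
  obtain ⟨trs, hrun, rfl⟩ := exists_tRunTo_of_region hproj hγ
  obtain ⟨l, hl, hs⟩ := exists_sorted_perm (rawOutputs α trs)
  obtain ⟨trs', sf', hrun', hl', -⟩ := h ⟨trs, sf, hrun, hl, hs⟩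
  rw [map_eq_of_perm hni hrun.length_eq hrun'.length_eq (hl.symm.trans hl')]
  exact ⟨sf', hrun'.toRegion hho hproj⟩

/-- for a weakly-complete deterministic TFSM with half-open guards, states
`s, s'` and a non-integer `α ∈ Dom(s) = Dom(s')`: if
`out_{R(S)}(s,[α]_{I_G}) ≠ out_{R(S)}(s',[α]_{I_G})` then
`timed_out_S(s,α) ≠ timed_out_S(s',α)`. -/
theorem stmt11 {S I O : Type} [Fintype S] [Nonempty S] [Fintype I] [Nonempty I]
    [Fintype O] [Nonempty O]
    (M : TFSM S I O) (hfin : Set.Finite M) (hdet : TFSMDeterministic M)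
    (hwc : WeaklyComplete M) (hho : HalfOpenGuards M)
    (s s' : S) (α : List (I × ℝ)) (hni : NonInteger α)
    (hd : α ∈ TDom M s) (hd' : α ∈ TDom M s')
    (β : List (I × Guard)) (hproj : Projects M 0 α β)
    (hne : FOut (regionFSM M) s β ≠ FOut (regionFSM M) s' β) :
    timedOut M s α ≠ timedOut M s' α := by
  intro h
  exact hne ((fOut_subset hho hni hproj h.subset).antisymm
    (fOut_subset hho hni hproj h.symm.subset))
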